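/- arXiv:2403.05836 — 2 statements merged into one kernel-verified Lean document; each statement's English description precedes it below -/
import Mathlib

section
/- Let τ₂ be the topology on the bicyclic monoid C(p,q) generated by taking, as a neighbourhood base at each point q^i p^j, the family of sets O_n(q^i p^j) = {q^i p^j} ∪ (↓≼ q^{i+n} p^{j+n} \ {q^{i+n} p^{j+n}}) for n ∈ ℕ. Then for every q^i p^j ∈ C(p,q) and every n ∈ ℕ, the closure of O_n(q^i p^j) in (C(p,q), τ₂) equals ↕≼ q^i p^j, and the set ↕≼ q^i p^j is compact in (C(p,q), τ₂). -/
/-- The bicyclic monoid `C(p,q)` modeled on `ℕ × ℕ`, where `(k, l)` represents `q^k p^l`: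
`(k,l)·(m,n) = (k + (m ∸ l), n + (l ∸ m))`. -/
def bmul (a b : ℕ × ℕ) : ℕ × ℕ := (a.1 + (b.1 - a.2), b.2 + (a.2 - b.1))

/-- The natural partial order on the bicyclic monoid: `x ≼ y` iff `x = y·e`
for some idempotent `e`. -/
def bLe (x y : ℕ × ℕ) : Prop := ∃ e : ℕ × ℕ, bmul e e = e ∧ x = bmul y e

/-- `↓≼ x`, the down-set of `x` with respect to the natural partial order. -/
def bDown (x : ℕ × ℕ) : Set (ℕ × ℕ) := {y | bLe y x}

/-- `↑≼ x`, the up-set of `x` with respect to the natural partial order. -/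
def bUp (x : ℕ × ℕ) : Set (ℕ × ℕ) := {y | bLe x y}

/-- `↕≼ x = ↑≼ x ∪ ↓≼ x`. -/
def bUpDown (x : ℕ × ℕ) : Set (ℕ × ℕ) := bUp x ∪ bDown x

/-- `O_n(q^i p^j) = {q^i p^j} ∪ (↓≼ q^{i+n} p^{j+n} \ {q^{i+n} p^{j+n}})`. -/
def O2 (n : ℕ) (x : ℕ × ℕ) : Set (ℕ × ℕ) :=
  {x} ∪ (bDown (x.1 + n, x.2 + n) \ {(x.1 + n, x.2 + n)})

/-- The topology `τ₂` on the bicyclic monoid generated by the sets `O_n(q^i p^j)`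
as a neighbourhood base at each point `q^i p^j`. -/
def tau2 : TopologicalSpace (ℕ × ℕ) :=
  TopologicalSpace.generateFrom {S | ∃ x : ℕ × ℕ, ∃ n : ℕ, S = O2 n x}

theorem bLe_iff (y x : ℕ × ℕ) : bLe y x ↔ ∃ k, y = (x.1 + k, x.2 + k) := by
  obtain ⟨a, b⟩ := x
  obtain ⟨c, d⟩ := y
  unfold bLe bmul
  constructor
  · rintro ⟨⟨e, f⟩, h1, h2⟩
    simp only [Prod.mk.injEq] at *
    exact ⟨e - b, by omega⟩
  · rintro ⟨k, h⟩
    refine ⟨(b + k, b + k), ?_⟩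
    simp only [Prod.mk.injEq] at *
    omega

theorem mem_O2_iff (n : ℕ) (y x : ℕ × ℕ) :
    y ∈ O2 n x ↔ y.1 + x.2 = x.1 + y.2 ∧ (y.1 = x.1 ∨ x.1 + n < y.1) := by
  obtain ⟨a, b⟩ := x
  obtain ⟨c, d⟩ := y
  simp only [O2, bDown, Set.mem_union, Set.mem_singleton_iff, Set.mem_sdiff, Set.mem_ofPred_eq,
    bLe_iff, Prod.mk.injEq]
  constructor
  · rintro (h | ⟨⟨k, h⟩, h'⟩) <;> omega
  · rintro ⟨h, h' | h'⟩
    · left; omega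
    · right; exact ⟨⟨c - (a + n), by omega⟩, by omega⟩

theorem mem_bUpDown_iff (y x : ℕ × ℕ) :
    y ∈ bUpDown x ↔ y.1 + x.2 = x.1 + y.2 := by
  obtain ⟨a, b⟩ := x
  obtain ⟨c, d⟩ := y
  simp only [bUpDown, bUp, bDown, Set.mem_union, Set.mem_ofPred_eq, bLe_iff, Prod.mk.injEq]
  constructor
  · rintro (⟨k, h⟩ | ⟨k, h⟩) <;> omega
  · intro h
    rcases le_total a c with h' | h'
    · right; exact ⟨c - a, by omega⟩
    · left; exact ⟨a - c, by omega⟩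

theorem tau2_tail {U : Set (ℕ × ℕ)} (hU : @IsOpen _ tau2 U) :
    ∀ z ∈ U, ∃ k, O2 k z ⊆ U := by
  change TopologicalSpace.GenerateOpen _ U at hU
  induction hU with
  | basic s hs =>
    obtain ⟨x, n, rfl⟩ := hs
    intro z hz
    refine ⟨x.1 + n, fun y hy => ?_⟩
    rw [mem_O2_iff] at *
    omega
  | univ => exact fun z _ => ⟨0, Set.subset_univ _⟩
  | inter s t _ _ h1 h2 =>
    rintro z ⟨hs, ht⟩
    obtain ⟨k, hk⟩ := h1 z hs
    obtain ⟨l, hl⟩ := h2 z ht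
    refine ⟨k + l, fun y hy => ⟨hk ?_, hl ?_⟩⟩ <;> rw [mem_O2_iff] at * <;> omega
  | sUnion S _ h =>
    rintro z ⟨s, hs, hz⟩
    obtain ⟨k, hk⟩ := h s hs z hz
    exact ⟨k, hk.trans (Set.subset_sUnion_of_mem hs)⟩

theorem isOpen_O2 (n : ℕ) (x : ℕ × ℕ) : @IsOpen _ tau2 (O2 n x) :=
  TopologicalSpace.GenerateOpen.basic _ ⟨x, n, rfl⟩

/-- In `(C(p,q), τ₂)`: `cl(O_n(q^i p^j)) = ↕≼ q^i p^j`, and `↕≼ q^i p^j` is compact. -/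
theorem stmt5 (i j n : ℕ) :
    @closure (ℕ × ℕ) tau2 (O2 n (i, j)) = bUpDown (i, j) ∧
    @IsCompact (ℕ × ℕ) tau2 (bUpDown (i, j)) := by
  letI := tau2
  constructor
  · ext z
    rw [mem_closure_iff, mem_bUpDown_iff]
    constructor
    · intro h
      obtain ⟨y, hy1, hy2⟩ := h (O2 0 z) (isOpen_O2 0 z) ((mem_O2_iff _ _ _).2 (by omega))
      rw [mem_O2_iff] at hy1 hy2
      dsimp only at *
      omega
    · intro h U hU hz
      obtain ⟨k, hk⟩ := tau2_tail hU z hz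
      dsimp only at h
      refine ⟨(z.1 + (i + n + k + 1), z.2 + (i + n + k + 1)), hk ?_, ?_⟩ <;>
        rw [mem_O2_iff] <;> dsimp only <;> omega
  · have ht : Filter.Tendsto (fun m : ℕ => (i - j + m, j - i + m)) Filter.atTop
        (nhds (i, j)) := by
      rw [tendsto_nhds]
      intro U hU hz
      obtain ⟨k, hk⟩ := tau2_tail hU _ hz
      filter_upwards [Filter.eventually_gt_atTop (i + k)] with m hm
      apply hk
      rw [mem_O2_iff]
      dsimp only
      omega
    have hc := ht.isCompact_insert_range
    convert hc using 1
    ext ⟨a, b⟩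
    simp only [mem_bUpDown_iff, Set.mem_insert_iff, Set.mem_range, Prod.mk.injEq]
    constructor
    · intro h
      right
      exact ⟨min a b, by omega⟩
    · rintro (h | ⟨m, h⟩) <;> omega
end

section
/- Let τ be a shift-continuous T₁ topology on the bicyclic monoid C(p,q) and fix i, j, m, n ∈ ℕ. Then the map x ↦ q^i p^m · x · q^n p^j maps ↓≼ q^m p^n onto ↓≼ q^i p^j (sending q^{m+k} p^{n+k} to q^{i+k} p^{j+k} for every k ∈ ℕ), the map x ↦ q^m p^i · x · q^j p^n maps ↓≼ q^i p^j onto ↓≼ q^m p^n, these two restrictions are mutually inverse, and each is a homeomorphism between the subspaces ↓≼ q^m p^n and ↓≼ q^i p^j of (C(p,q), τ). -/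
/-- The subspace topology on a subset `Y` of the bicyclic monoid. -/
def subT (τ : TopologicalSpace (ℕ × ℕ)) (Y : Set (ℕ × ℕ)) : TopologicalSpace Y :=
  TopologicalSpace.induced Subtype.val τ

theorem mem_bDown_iff (a b : ℕ) (x : ℕ × ℕ) :
    x ∈ bDown (a, b) ↔ ∃ k : ℕ, x = (a + k, b + k) := by
  constructor
  · rintro ⟨⟨u, v⟩, he, rfl⟩
    simp only [bmul, Prod.mk.injEq] at he
    have huv : u = v := by omega
    subst huv
    exact ⟨u - b, by apply Prod.ext <;> simp only [bmul] <;> omega⟩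
  · rintro ⟨k, rfl⟩
    refine ⟨(b + k, b + k), ?_, ?_⟩ <;> simp only [bmul, Prod.mk.injEq] <;> omega

theorem bmul_shift (i j m n k : ℕ) :
    bmul (bmul (i, m) (m + k, n + k)) (n, j) = (i + k, j + k) := by
  simp only [bmul, Prod.mk.injEq]; omega

/-- The map `x ↦ q^i p^m · x · q^n p^j` restricts to a homeomorphism of `↓≼ q^m p^n`
onto `↓≼ q^i p^j` (sending `q^{m+k} p^{n+k}` to `q^{i+k} p^{j+k}`), whose inverse is the
restriction of `x ↦ q^m p^i · x · q^j p^n`. -/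
theorem stmt12 (τ : TopologicalSpace (ℕ × ℕ))
    (hT1 : @T1Space (ℕ × ℕ) τ)
    (hleft : ∀ a : ℕ × ℕ, @Continuous (ℕ × ℕ) (ℕ × ℕ) τ τ (fun x => bmul a x))
    (hright : ∀ a : ℕ × ℕ, @Continuous (ℕ × ℕ) (ℕ × ℕ) τ τ (fun x => bmul x a))
    (i j m n : ℕ)
    (f : ℕ × ℕ → ℕ × ℕ) (hf : f = fun x => bmul (bmul (i, m) x) (n, j))
    (g : ℕ × ℕ → ℕ × ℕ) (hg : g = fun x => bmul (bmul (m, i) x) (j, n)) :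
    (∀ k : ℕ, f (m + k, n + k) = (i + k, j + k)) ∧
    f '' bDown (m, n) = bDown (i, j) ∧
    g '' bDown (i, j) = bDown (m, n) ∧
    (∀ x ∈ bDown (m, n), g (f x) = x) ∧
    (∀ y ∈ bDown (i, j), f (g y) = y) ∧
    ∃ h : @Homeomorph (bDown (m, n)) (bDown (i, j))
        (subT τ (bDown (m, n))) (subT τ (bDown (i, j))),
      (∀ x : bDown (m, n), (h x : ℕ × ℕ) = f x) ∧
      (∀ y : bDown (i, j), (h.symm y : ℕ × ℕ) = g y) := by
  have hfk : ∀ k : ℕ, f (m + k, n + k) = (i + k, j + k) := by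
    intro k; rw [hf]; exact bmul_shift i j m n k
  have hgk : ∀ k : ℕ, g (i + k, j + k) = (m + k, n + k) := by
    intro k; rw [hg]; exact bmul_shift m n i j k
  have hfc : @Continuous _ _ τ τ f := by
    rw [hf]; exact (hright (n, j)).comp (hleft (i, m))
  have hgc : @Continuous _ _ τ τ g := by
    rw [hg]; exact (hright (j, n)).comp (hleft (m, i))
  have hfm : ∀ x ∈ bDown (m, n), f x ∈ bDown (i, j) := by
    intro x hx
    obtain ⟨k, rfl⟩ := (mem_bDown_iff _ _ _).1 hx
    exact (mem_bDown_iff _ _ _).2 ⟨k, hfk k⟩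
  have hgm : ∀ x ∈ bDown (i, j), g x ∈ bDown (m, n) := by
    intro x hx
    obtain ⟨k, rfl⟩ := (mem_bDown_iff _ _ _).1 hx
    exact (mem_bDown_iff _ _ _).2 ⟨k, hgk k⟩
  have hgf : ∀ x ∈ bDown (m, n), g (f x) = x := by
    intro x hx
    obtain ⟨k, rfl⟩ := (mem_bDown_iff _ _ _).1 hx
    rw [hfk, hgk]
  have hfg : ∀ x ∈ bDown (i, j), f (g x) = x := by
    intro x hx
    obtain ⟨k, rfl⟩ := (mem_bDown_iff _ _ _).1 hx
    rw [hgk, hfk]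
  refine ⟨hfk, ?_, ?_, hgf, hfg, ?_⟩
  · apply Set.Subset.antisymm
    · rintro _ ⟨x, hx, rfl⟩; exact hfm x hx
    · intro y hy; exact ⟨g y, hgm y hy, hfg y hy⟩
  · apply Set.Subset.antisymm
    · rintro _ ⟨x, hx, rfl⟩; exact hgm x hx
    · intro y hy; exact ⟨f y, hfm y hy, hgf y hy⟩
  · let _ := τ
    refine ⟨@Homeomorph.mk _ _ (subT τ (bDown (m, n))) (subT τ (bDown (i, j)))
      ⟨fun x => ⟨f x, hfm x x.2⟩, fun y => ⟨g y, hgm y y.2⟩,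
        fun x => Subtype.ext (hgf x x.2), fun y => Subtype.ext (hfg y y.2)⟩ ?_ ?_,
      fun x => rfl, fun y => rfl⟩
    · exact continuous_induced_rng.2 (hfc.comp continuous_induced_dom)
    · exact continuous_induced_rng.2 (hgc.comp continuous_induced_dom)
end
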